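/- Let X be a compact metric space and Q : C(X, ℝ) → ℝ a convex continuous functional with Q(0) = 0 which is monotone (ω ≤ ω′ pointwise implies Q(ω) ≤ Q(ω′)) and satisfies Q(ω + c·1) = Q(ω) + c for every ω ∈ C(X, ℝ) and every constant c ∈ ℝ. Define J(μ) := sup_{ω ∈ C(X,ℝ)} ( ∫ ω dμ − Q(ω) ) for μ ∈ 𝒫(X). Then for every ω ∈ C(X, ℝ) one has the duality Q(ω) = sup_{μ ∈ 𝒫(X)} ( ∫ ω dμ − J(μ) ). -/

import Mathlib

open MeasureTheory Filter Topology ENNReal NNReal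

/-- The Legendre-type functional `J(μ) = sup_ω (∫ ω dμ - Q ω)` associated with a
functional `Q` on continuous functions. -/
noncomputable def legendreJ {X : Type*} [MetricSpace X] [MeasurableSpace X]
    (Q : C(X, ℝ) → ℝ) (μ : ProbabilityMeasure X) : EReal :=
  ⨆ ω : C(X, ℝ), (((∫ x, ω x ∂(μ : Measure X)) - Q ω : ℝ) : EReal)

theorem legendre_functional
    {X : Type*} [MetricSpace X] [CompactSpace X] [Nonempty X]
    (Q : C(X, ℝ) → ℝ) (hQconv : ConvexOn ℝ Set.univ Q) (hQcont : Continuous Q)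
    (hQmono : ∀ ω ω' : C(X, ℝ), (∀ x, ω x ≤ ω' x) → Q ω ≤ Q ω')
    (hQconst : ∀ (ω : C(X, ℝ)) (c : ℝ), Q (ω + ContinuousMap.const X c) = Q ω + c)
    (ω : C(X, ℝ)) : ∃ g : C(X, ℝ) →ₗ[ℝ] ℝ, (∀ η : C(X, ℝ), (∀ x, 0 ≤ η x) → 0 ≤ g η) ∧
      g 1 = 1 ∧ ∀ η, g η - Q η ≤ g ω - Q ω := by
  have hc : Convex ℝ {η | Q η < Q ω} := by
    simpa using hQconv.convex_lt (Q ω)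
  obtain ⟨f, hf⟩ := geometric_hahn_banach_open_point hc
    (isOpen_lt hQcont continuous_const) (x := ω) (by simp)
  have hk : ∀ c : ℝ, ContinuousMap.const X c = c • (1 : C(X, ℝ)) := by
    intro c; ext x; simp
  have h1 : 0 < f 1 := by
    have := hf (ω + ContinuousMap.const X (-1)) (by simp only [Set.mem_setOf_eq, hQconst]; linarith)
    rw [hk, map_add, map_smul, smul_eq_mul] at this
    linarith
  have key : ∀ η, (f 1)⁻¹ * f η - Q η ≤ (f 1)⁻¹ * f ω - Q ω := by
    intro η
    refine le_of_forall_pos_le_add fun ε hε => ?_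
    have := hf (η + ContinuousMap.const X (Q ω - Q η - ε))
      (by simp only [Set.mem_setOf_eq, hQconst]; linarith)
    rw [hk, map_add, map_smul, smul_eq_mul] at this
    have h2 := mul_lt_mul_of_pos_left this (inv_pos.2 h1)
    have h3 : (f 1)⁻¹ * (f η + (Q ω - Q η - ε) * f 1) = (f 1)⁻¹ * f η + (Q ω - Q η - ε) := by
      field_simp
    linarith
  refine ⟨(f 1)⁻¹ • (f : C(X, ℝ) →ₗ[ℝ] ℝ), ?_, ?_, ?_⟩
  · intro η hη
    have h2 := key (ω - η)
    have h3 := hQmono (ω - η) ω (fun x => by simpa using hη x)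
    rw [map_sub, mul_sub] at h2
    simp only [LinearMap.smul_apply, smul_eq_mul, ContinuousLinearMap.coe_coe]
    linarith
  · simp [h1.ne']
  · intro η
    simpa using key η

theorem legendre_measure
    {X : Type*} [MetricSpace X] [CompactSpace X]
    [MeasurableSpace X] [BorelSpace X] (g : C(X, ℝ) →ₗ[ℝ] ℝ)
    (hg : ∀ η : C(X, ℝ), (∀ x, 0 ≤ η x) → 0 ≤ g η) (h1 : g 1 = 1) :
    ∃ μ : ProbabilityMeasure X, ∀ η : C(X, ℝ), ∫ x, η x ∂(μ : Measure X) = g η := by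
  let Λ : CompactlySupportedContinuousMap X ℝ →ₚ[ℝ] ℝ := PositiveLinearMap.mk₀
    { toFun := fun f => g f.toContinuousMap
      map_add' := fun a b => map_add g a.toContinuousMap b.toContinuousMap
      map_smul' := fun a b => map_smul g a b.toContinuousMap }
    (fun f hf => hg _ hf)
  let L : C(X, ℝ) → CompactlySupportedContinuousMap X ℝ := fun η =>
    ⟨η, HasCompactSupport.of_compactSpace _⟩
  have hint : ∀ η : C(X, ℝ), ∫ x, η x ∂(RealRMK.rieszMeasure Λ) = g η := fun η =>
    RealRMK.integral_rieszMeasure Λ (L η)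
  have hp : IsProbabilityMeasure (RealRMK.rieszMeasure Λ) := by
    have := hint 1
    rw [h1] at this
    simp [Measure.real] at this
    exact ⟨by rwa [ENNReal.toReal_eq_one_iff] at this⟩
  exact ⟨⟨_, hp⟩, hint⟩

/-- Let `X` be a compact metric space and `Q : C(X,ℝ) → ℝ` a convex,
continuous functional with `Q 0 = 0`, which is monotone and additively homogeneous with
respect to constants (`Q (ω + c•1) = Q ω + c`). With
`J(μ) := sup_ω (∫ ω dμ - Q ω)`, one has the duality
`Q ω = sup_μ (∫ ω dμ - J μ)` for every `ω ∈ C(X,ℝ)`. -/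
theorem legendre_duality
    {X : Type*} [MetricSpace X] [CompactSpace X] [Nonempty X]
    [MeasurableSpace X] [BorelSpace X]
    (Q : C(X, ℝ) → ℝ) (hQconv : ConvexOn ℝ Set.univ Q) (hQcont : Continuous Q)
    (hQ0 : Q 0 = 0)
    (hQmono : ∀ ω ω' : C(X, ℝ), (∀ x, ω x ≤ ω' x) → Q ω ≤ Q ω')
    (hQconst : ∀ (ω : C(X, ℝ)) (c : ℝ), Q (ω + ContinuousMap.const X c) = Q ω + c)
    (ω : C(X, ℝ)) :
    (Q ω : EReal) =
      ⨆ μ : ProbabilityMeasure X,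
        (((∫ x, ω x ∂(μ : Measure X)) : ℝ) : EReal) - legendreJ Q μ := by
  apply le_antisymm
  · obtain ⟨g, hg, h1, hsub⟩ := legendre_functional Q hQconv hQcont hQmono hQconst ω
    obtain ⟨μ, hμ⟩ := legendre_measure g hg h1
    refine le_trans ?_ (le_iSup _ μ)
    have hJ : legendreJ Q μ ≤ ((g ω - Q ω : ℝ) : EReal) := by
      refine iSup_le fun η => ?_
      rw [hμ]
      exact EReal.coe_le_coe_iff.2 (hsub η)
    rw [hμ]
    refine le_trans ?_ (EReal.sub_le_sub le_rfl hJ)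
    rw [← EReal.coe_sub]
    exact EReal.coe_le_coe_iff.2 (by linarith)
  · refine iSup_le fun μ => ?_
    have hJ : (((∫ x, ω x ∂(μ : Measure X)) - Q ω : ℝ) : EReal) ≤ legendreJ Q μ :=
      le_iSup (fun ω : C(X, ℝ) => (((∫ x, ω x ∂(μ : Measure X)) - Q ω : ℝ) : EReal)) ω
    refine le_trans (EReal.sub_le_sub le_rfl hJ) ?_
    rw [← EReal.coe_sub]
    exact EReal.coe_le_coe_iff.2 (by linarith)
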